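/- Upper HJBI bound at the candidate volatility: there exist constants C > 0 and ψ₀ > 0 such that for every (t,s,y) ∈ D and every ψ ∈ (0,ψ₀), w^ψ_t(t,s,y) + sup_{ϑ ∈ ℝ} H^ψ(t,s,y; ϑ, σ^ψ(t,s,y)) ≤ C ψ³. -/

import Mathlib

open Set

/-- The data of the hedging problem with small uncertainty aversion: the constants
`T, K, ε, y_l, y_u`, the reference volatility `σ̄` (`sb`), the reference value `V̄` (`V`)
with its `s`-derivatives `Vs, Vss`, the penalty function `f` with its `ς`-derivatives
`f1, ..., f4`, the utility `U` with derivatives `U1, U2, U3`, and the correction terms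
`w̃` (`wt`) and `ŵ` (`wh`) together with their partial derivatives. -/
structure HedgeData where
  T : ℝ
  K : ℝ
  eps : ℝ
  yl : ℝ
  yu : ℝ
  sb : ℝ → ℝ → ℝ
  V : ℝ → ℝ → ℝ
  Vs : ℝ → ℝ → ℝ
  Vss : ℝ → ℝ → ℝ
  f : ℝ → ℝ → ℝ → ℝ → ℝ
  f1 : ℝ → ℝ → ℝ → ℝ → ℝ
  f2 : ℝ → ℝ → ℝ → ℝ → ℝ
  f3 : ℝ → ℝ → ℝ → ℝ → ℝ
  f4 : ℝ → ℝ → ℝ → ℝ → ℝ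
  U : ℝ → ℝ
  U1 : ℝ → ℝ
  U2 : ℝ → ℝ
  U3 : ℝ → ℝ
  wt : ℝ → ℝ → ℝ → ℝ
  wtT : ℝ → ℝ → ℝ → ℝ
  wtS : ℝ → ℝ → ℝ → ℝ
  wtY : ℝ → ℝ → ℝ → ℝ
  wtSS : ℝ → ℝ → ℝ → ℝ
  wtSY : ℝ → ℝ → ℝ → ℝ
  wtYY : ℝ → ℝ → ℝ → ℝ
  wh : ℝ → ℝ → ℝ → ℝ
  whT : ℝ → ℝ → ℝ → ℝ
  whS : ℝ → ℝ → ℝ → ℝ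
  whY : ℝ → ℝ → ℝ → ℝ
  whSS : ℝ → ℝ → ℝ → ℝ
  whSY : ℝ → ℝ → ℝ → ℝ
  whYY : ℝ → ℝ → ℝ → ℝ

/-- The candidate value function `w^ψ(t,s,y) = U(y) - U'(y) w̃(t,s,y) ψ + U'(y) ŵ(t,s,y) ψ²`. -/
noncomputable def HedgeData.wPsi (d : HedgeData) (ψ t s y : ℝ) : ℝ :=
  d.U y - d.U1 y * d.wt t s y * ψ + d.U1 y * d.wh t s y * ψ ^ 2

/-- Partial derivative `w^ψ_t`. -/
noncomputable def HedgeData.wPsiT (d : HedgeData) (ψ t s y : ℝ) : ℝ :=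
  -(d.U1 y * d.wtT t s y) * ψ + d.U1 y * d.whT t s y * ψ ^ 2

/-- Partial derivative `w^ψ_y`. -/
noncomputable def HedgeData.wPsiY (d : HedgeData) (ψ t s y : ℝ) : ℝ :=
  d.U1 y - (d.U2 y * d.wt t s y + d.U1 y * d.wtY t s y) * ψ
    + (d.U2 y * d.wh t s y + d.U1 y * d.whY t s y) * ψ ^ 2

/-- Partial derivative `w^ψ_ss`. -/
noncomputable def HedgeData.wPsiSS (d : HedgeData) (ψ t s y : ℝ) : ℝ :=
  -(d.U1 y * d.wtSS t s y) * ψ + d.U1 y * d.whSS t s y * ψ ^ 2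

/-- Partial derivative `w^ψ_sy`. -/
noncomputable def HedgeData.wPsiSY (d : HedgeData) (ψ t s y : ℝ) : ℝ :=
  -(d.U2 y * d.wtS t s y + d.U1 y * d.wtSY t s y) * ψ
    + (d.U2 y * d.whS t s y + d.U1 y * d.whSY t s y) * ψ ^ 2

/-- Partial derivative `w^ψ_yy`. -/
noncomputable def HedgeData.wPsiYY (d : HedgeData) (ψ t s y : ℝ) : ℝ :=
  d.U2 y - (d.U3 y * d.wt t s y + 2 * d.U2 y * d.wtY t s y + d.U1 y * d.wtYY t s y) * ψ
    + (d.U3 y * d.wh t s y + 2 * d.U2 y * d.whY t s y + d.U1 y * d.whYY t s y) * ψ ^ 2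

/-- `σ̃(t,s,y) = σ̄(t,s) s² V̄_ss(t,s) / f''(t,s,y;σ̄(t,s))`. -/
noncomputable def HedgeData.sigmaTilde (d : HedgeData) (t s y : ℝ) : ℝ :=
  d.sb t s * s ^ 2 * d.Vss t s / d.f2 t s y (d.sb t s)

/-- `θ̃(t,s,y) = w̃_s(t,s,y) + (U'(y)/U''(y)) w̃_sy(t,s,y)`. -/
noncomputable def HedgeData.thetaTilde (d : HedgeData) (t s y : ℝ) : ℝ :=
  d.wtS t s y + d.U1 y / d.U2 y * d.wtSY t s y

/-- The candidate volatility `σ^ψ = σ̄ + σ̃ ψ`. -/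
noncomputable def HedgeData.sigmaPsi (d : HedgeData) (ψ t s y : ℝ) : ℝ :=
  d.sb t s + d.sigmaTilde t s y * ψ

/-- The candidate strategy `θ^ψ = V̄_s + θ̃ ψ`. -/
noncomputable def HedgeData.thetaPsi (d : HedgeData) (ψ t s y : ℝ) : ℝ :=
  d.Vs t s + d.thetaTilde t s y * ψ

/-- The Hamiltonian `H^ψ(t,s,y;ϑ,ς)`. -/
noncomputable def HedgeData.Ham (d : HedgeData) (ψ t s y ϑ ς : ℝ) : ℝ :=
  1 / ψ * d.U1 y * d.f t s y ς
    + 1 / 2 * s ^ 2 * d.Vss t s * ((d.sb t s) ^ 2 - ς ^ 2) * d.wPsiY ψ t s y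
    + 1 / 2 * ς ^ 2 * s ^ 2 *
      (d.wPsiSS ψ t s y + 2 * (ϑ - d.Vs t s) * d.wPsiSY ψ t s y
        + (ϑ - d.Vs t s) ^ 2 * d.wPsiYY ψ t s y)

/-- The standing assumptions (Assumption 3.1 of the paper). -/
structure HedgeData.Assumptions (d : HedgeData) : Prop where
  hT : 0 < d.T
  hK : 1 < d.K
  heps : 0 < d.eps
  hy : d.yl < d.yu
  sb_mem : ∀ t ∈ Icc (0:ℝ) d.T, ∀ s ∈ Icc d.K⁻¹ d.K, d.sb t s ∈ Icc (0:ℝ) d.K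
  sb_lb : ∀ t ∈ Icc (0:ℝ) d.T, ∀ s ∈ Ioo d.K⁻¹ d.K, d.eps ≤ d.sb t s
  sb_ub : ∀ t ∈ Icc (0:ℝ) d.T, ∀ s ∈ Ioo d.K⁻¹ d.K, d.sb t s ≤ d.K - d.eps
  sb_bdry : ∀ t ∈ Icc (0:ℝ) d.T, d.sb t d.K⁻¹ = 0 ∧ d.sb t d.K = 0
  V_derivS : ∀ t ∈ Ioo (0:ℝ) d.T, ∀ s ∈ Ioo d.K⁻¹ d.K, HasDerivAt (d.V t) (d.Vs t s) s
  V_derivSS : ∀ t ∈ Ioo (0:ℝ) d.T, ∀ s ∈ Ioo d.K⁻¹ d.K, HasDerivAt (d.Vs t) (d.Vss t s) s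
  Vss_cont : ∀ t ∈ Ioo (0:ℝ) d.T, ContinuousOn (d.Vss t) (Ioo d.K⁻¹ d.K)
  Vss_bdd : ∀ t ∈ Ioo (0:ℝ) d.T, ∀ s ∈ Ioo d.K⁻¹ d.K, |s ^ 2 * d.Vss t s| ≤ d.K
  f_deriv1 : ∀ t s y ς : ℝ, HasDerivAt (d.f t s y) (d.f1 t s y ς) ς
  f_deriv2 : ∀ t s y ς : ℝ, HasDerivAt (d.f1 t s y) (d.f2 t s y ς) ς
  f_deriv3 : ∀ t s y ς : ℝ, HasDerivAt (d.f2 t s y) (d.f3 t s y ς) ς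
  f_deriv4 : ∀ t s y ς : ℝ, HasDerivAt (d.f3 t s y) (d.f4 t s y ς) ς
  f4_cont : ∀ t s y : ℝ, Continuous (d.f4 t s y)
  f_nonneg : ∀ t s y ς : ℝ, 0 ≤ ς → 0 ≤ d.f t s y ς
  f_min : ∀ t ∈ Ioo (0:ℝ) d.T, ∀ s ∈ Ioo d.K⁻¹ d.K, ∀ y ∈ Ioo d.yl d.yu,
    d.f t s y (d.sb t s) = 0 ∧ d.f1 t s y (d.sb t s) = 0
  f2_bdd : ∀ t ∈ Ioo (0:ℝ) d.T, ∀ s ∈ Ioo d.K⁻¹ d.K, ∀ y ∈ Ioo d.yl d.yu,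
    ∀ ς ∈ Icc (0:ℝ) d.K, 1 / d.K ≤ d.f2 t s y ς ∧ d.f2 t s y ς ≤ d.K
  f34_bdd : ∀ t ∈ Ioo (0:ℝ) d.T, ∀ s ∈ Ioo d.K⁻¹ d.K, ∀ y ∈ Ioo d.yl d.yu,
    ∀ ς ∈ Icc (0:ℝ) d.K, |d.f3 t s y ς| ≤ d.K ∧ |d.f4 t s y ς| ≤ d.K
  U_deriv1 : ∀ y : ℝ, HasDerivAt d.U (d.U1 y) y
  U_deriv2 : ∀ y : ℝ, HasDerivAt d.U1 (d.U2 y) y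
  U_deriv3 : ∀ y : ℝ, HasDerivAt d.U2 (d.U3 y) y
  U3_cont : Continuous d.U3
  U1_pos : ∀ y : ℝ, 0 < d.U1 y
  U2_neg : ∀ y : ℝ, d.U2 y < 0
  wt_cont : ContinuousOn (fun p : ℝ × ℝ × ℝ => d.wt p.1 p.2.1 p.2.2)
    (Icc 0 d.T ×ˢ Icc d.K⁻¹ d.K ×ˢ Icc d.yl d.yu)
  wh_cont : ContinuousOn (fun p : ℝ × ℝ × ℝ => d.wh p.1 p.2.1 p.2.2)
    (Icc 0 d.T ×ˢ Icc d.K⁻¹ d.K ×ˢ Icc d.yl d.yu)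
  wt_deriv : ∀ t ∈ Ioo (0:ℝ) d.T, ∀ s ∈ Ioo d.K⁻¹ d.K, ∀ y ∈ Ioo d.yl d.yu,
    HasDerivAt (fun t' => d.wt t' s y) (d.wtT t s y) t ∧
    HasDerivAt (fun s' => d.wt t s' y) (d.wtS t s y) s ∧
    HasDerivAt (fun y' => d.wt t s y') (d.wtY t s y) y ∧
    HasDerivAt (fun s' => d.wtS t s' y) (d.wtSS t s y) s ∧
    HasDerivAt (fun y' => d.wtS t s y') (d.wtSY t s y) y ∧
    HasDerivAt (fun y' => d.wtY t s y') (d.wtYY t s y) y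
  wh_deriv : ∀ t ∈ Ioo (0:ℝ) d.T, ∀ s ∈ Ioo d.K⁻¹ d.K, ∀ y ∈ Ioo d.yl d.yu,
    HasDerivAt (fun t' => d.wh t' s y) (d.whT t s y) t ∧
    HasDerivAt (fun s' => d.wh t s' y) (d.whS t s y) s ∧
    HasDerivAt (fun y' => d.wh t s y') (d.whY t s y) y ∧
    HasDerivAt (fun s' => d.whS t s' y) (d.whSS t s y) s ∧
    HasDerivAt (fun y' => d.whS t s y') (d.whSY t s y) y ∧
    HasDerivAt (fun y' => d.whY t s y') (d.whYY t s y) y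
  wt_deriv_cont : ∀ g ∈ [d.wtT, d.wtS, d.wtY, d.wtSS, d.wtSY, d.wtYY],
    ContinuousOn (fun p : ℝ × ℝ × ℝ => g p.1 p.2.1 p.2.2)
      (Ioo 0 d.T ×ˢ Ioo d.K⁻¹ d.K ×ˢ Ioo d.yl d.yu)
  wh_deriv_cont : ∀ g ∈ [d.whT, d.whS, d.whY, d.whSS, d.whSY, d.whYY],
    ContinuousOn (fun p : ℝ × ℝ × ℝ => g p.1 p.2.1 p.2.2)
      (Ioo 0 d.T ×ˢ Ioo d.K⁻¹ d.K ×ˢ Ioo d.yl d.yu)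
  wt_bdd : ∀ g ∈ [d.wtT, d.wtS, d.wtY, d.wtSS, d.wtSY, d.wtYY],
    ∀ t ∈ Ioo (0:ℝ) d.T, ∀ s ∈ Ioo d.K⁻¹ d.K, ∀ y ∈ Ioo d.yl d.yu, |g t s y| ≤ d.K
  wh_bdd : ∀ g ∈ [d.whT, d.whS, d.whY, d.whSS, d.whSY, d.whYY],
    ∀ t ∈ Ioo (0:ℝ) d.T, ∀ s ∈ Ioo d.K⁻¹ d.K, ∀ y ∈ Ioo d.yl d.yu, |g t s y| ≤ d.K

/-- The PDEs (with source terms `g̃` and `ĝ`) and terminal/boundary conditions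
satisfied by the correction terms `w̃` and `ŵ`. -/
structure HedgeData.PDEAssumptions (d : HedgeData) : Prop where
  pde_wt : ∀ t ∈ Ioo (0:ℝ) d.T, ∀ s ∈ Ioo d.K⁻¹ d.K, ∀ y ∈ Ioo d.yl d.yu,
    d.wtT t s y + 1 / 2 * (d.sb t s) ^ 2 * s ^ 2 * d.wtSS t s y
      + (d.sb t s * s ^ 2 * d.Vss t s) ^ 2 / (2 * d.f2 t s y (d.sb t s)) = 0
  pde_wh : ∀ t ∈ Ioo (0:ℝ) d.T, ∀ s ∈ Ioo d.K⁻¹ d.K, ∀ y ∈ Ioo d.yl d.yu,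
    d.whT t s y + 1 / 2 * (d.sb t s) ^ 2 * s ^ 2 * d.whSS t s y
      + (1 / 6 * d.sigmaTilde t s y ^ 3 * d.f3 t s y (d.sb t s)
        - 1 / 2 * d.sigmaTilde t s y ^ 2 * s ^ 2 * d.Vss t s
        + d.sigmaTilde t s y * d.sb t s * s ^ 2
            * (d.Vss t s * d.wtY t s y - d.wtSS t s y)
        - d.U2 y / d.U1 y * (1 / 2 * (d.sb t s) ^ 2 * s ^ 2 * d.thetaTilde t s y ^ 2
            - d.sigmaTilde t s y ^ 2 * d.f2 t s y (d.sb t s) * d.wt t s y)) = 0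
  bc_T : ∀ s ∈ Ioo d.K⁻¹ d.K, ∀ y ∈ Ioo d.yl d.yu, d.wt d.T s y = 0 ∧ d.wh d.T s y = 0
  bc_S : ∀ t ∈ Ioo (0:ℝ) d.T, ∀ y ∈ Ioo d.yl d.yu,
    d.wt t d.K⁻¹ y = 0 ∧ d.wt t d.K y = 0 ∧ d.wh t d.K⁻¹ y = 0 ∧ d.wh t d.K y = 0

/-- Uniform boundedness of a four-argument function on a region. -/
def UBdd (S : ℝ → ℝ → ℝ → ℝ → Prop) (g : ℝ → ℝ → ℝ → ℝ → ℝ) : Prop :=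
  ∃ C : ℝ, ∀ t s y ψ, S t s y ψ → |g t s y ψ| ≤ C

section UBddLemmas

variable {S : ℝ → ℝ → ℝ → ℝ → Prop} {g h : ℝ → ℝ → ℝ → ℝ → ℝ}

lemma UBdd.const (c : ℝ) : UBdd S (fun _ _ _ _ => c) := ⟨|c|, fun _ _ _ _ _ => le_rfl⟩

lemma UBdd.add (hg : UBdd S g) (hh : UBdd S h) :
    UBdd S (fun t s y ψ => g t s y ψ + h t s y ψ) := by
  obtain ⟨a, ha⟩ := hg
  obtain ⟨b, hb⟩ := hh
  exact ⟨a + b, fun t s y ψ hS =>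
    (abs_add_le _ _).trans (add_le_add (ha t s y ψ hS) (hb t s y ψ hS))⟩

lemma UBdd.neg (hg : UBdd S g) : UBdd S (fun t s y ψ => -g t s y ψ) := by
  obtain ⟨a, ha⟩ := hg
  exact ⟨a, fun t s y ψ hS => by rw [abs_neg]; exact ha t s y ψ hS⟩

lemma UBdd.sub (hg : UBdd S g) (hh : UBdd S h) :
    UBdd S (fun t s y ψ => g t s y ψ - h t s y ψ) := by
  simp only [sub_eq_add_neg]
  exact hg.add hh.neg

lemma UBdd.mul (hg : UBdd S g) (hh : UBdd S h) :
    UBdd S (fun t s y ψ => g t s y ψ * h t s y ψ) := by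
  obtain ⟨a, ha⟩ := hg
  obtain ⟨b, hb⟩ := hh
  refine ⟨a * b, fun t s y ψ hS => ?_⟩
  rw [abs_mul]
  exact mul_le_mul (ha t s y ψ hS) (hb t s y ψ hS) (abs_nonneg _)
    ((abs_nonneg _).trans (ha t s y ψ hS))

lemma UBdd.pow (hg : UBdd S g) (n : ℕ) : UBdd S (fun t s y ψ => g t s y ψ ^ n) := by
  obtain ⟨a, ha⟩ := hg
  refine ⟨a ^ n, fun t s y ψ hS => ?_⟩
  rw [abs_pow]
  exact pow_le_pow_left₀ (abs_nonneg _) (ha t s y ψ hS) n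

end UBddLemmas

/-- One integration step of the Taylor estimate. -/
lemma taylor_step (h h' : ℝ → ℝ) (K σ : ℝ) (n : ℕ) (hK : 0 ≤ K) (hσ : σ ∈ Icc (0:ℝ) K)
    (hd : ∀ x, HasDerivAt h (h' x) x) (h0 : h σ = 0)
    (hb : ∀ x ∈ Icc (0:ℝ) K, |h' x| ≤ K * |x - σ| ^ n) :
    ∀ x ∈ Icc (0:ℝ) K, |h x| ≤ K * |x - σ| ^ (n + 1) := by
  intro x hx
  have key := (convex_uIcc σ x).norm_image_sub_le_of_norm_hasDerivWithin_le
    (f := h) (f' := h') (C := K * |x - σ| ^ n) (x := σ) (y := x)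
    (fun z _ => (hd z).hasDerivWithinAt)
    (fun z hz => by
      have hz' : z ∈ Icc (0:ℝ) K := by
        have := uIcc_subset_Icc hσ hx
        exact this hz
      refine (hb z hz').trans ?_
      have : |z - σ| ≤ |x - σ| := abs_sub_left_of_mem_uIcc hz
      gcongr)
    left_mem_uIcc right_mem_uIcc
  rw [h0, sub_zero, Real.norm_eq_abs, Real.norm_eq_abs] at key
  calc |h x| ≤ _ := key
    _ = _ := by ring

lemma taylor_four (f f1 f2 f3 f4 : ℝ → ℝ) (K σ : ℝ) (hK : 0 ≤ K) (hσ : σ ∈ Icc (0:ℝ) K)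
    (h1 : ∀ x, HasDerivAt f (f1 x) x) (h2 : ∀ x, HasDerivAt f1 (f2 x) x)
    (h3 : ∀ x, HasDerivAt f2 (f3 x) x) (h4 : ∀ x, HasDerivAt f3 (f4 x) x)
    (hf : f σ = 0) (hf1 : f1 σ = 0) (hb : ∀ x ∈ Icc (0:ℝ) K, |f4 x| ≤ K) :
    ∀ x ∈ Icc (0:ℝ) K,
      |f x - (1 / 2 * f2 σ * (x - σ) ^ 2 + 1 / 6 * f3 σ * (x - σ) ^ 3)| ≤ K * |x - σ| ^ 4 := by
  have e3 := taylor_step (fun x => f3 x - f3 σ) f4 K σ 0 hK hσ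
    (fun x => (h4 x).sub_const _) (by simp) (fun x hx => by simpa using hb x hx)
  have id1 : ∀ x, HasDerivAt (fun z : ℝ => z - σ) 1 x := fun x => (hasDerivAt_id x).sub_const σ
  have e2 := taylor_step (fun x => f2 x - f2 σ - f3 σ * (x - σ)) (fun x => f3 x - f3 σ) K σ 1 hK hσ
    (fun x => by
      have := ((h3 x).sub_const (f2 σ)).sub ((id1 x).const_mul (f3 σ))
      refine this.congr_deriv ?_
      ring) (by simp) e3
  have e1 := taylor_step (fun x => f1 x - f2 σ * (x - σ) - 1 / 2 * f3 σ * (x - σ) ^ 2)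
    (fun x => f2 x - f2 σ - f3 σ * (x - σ)) K σ 2 hK hσ
    (fun x => by
      have := ((h2 x).sub ((id1 x).const_mul (f2 σ))).sub
        (((id1 x).pow 2).const_mul (1 / 2 * f3 σ))
      refine this.congr_deriv ?_
      push_cast
      ring) (by simp [hf1]) e2
  exact taylor_step (fun x => f x - (1 / 2 * f2 σ * (x - σ) ^ 2 + 1 / 6 * f3 σ * (x - σ) ^ 3))
    (fun x => f1 x - f2 σ * (x - σ) - 1 / 2 * f3 σ * (x - σ) ^ 2) K σ 3 hK hσ
    (fun x => by
      have := (h1 x).sub ((((id1 x).pow 2).const_mul (1 / 2 * f2 σ)).add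
        (((id1 x).pow 3).const_mul (1 / 6 * f3 σ)))
      refine this.congr_deriv ?_
      push_cast
      ring) (by simp [hf]) e1

/-- Completing the square in the strategy variable. -/
lemma quad_bound (U2 A B θ ψ δ m Q : ℝ) (hm : 0 < m) (hψ : 0 < ψ)
    (ha : U2 + A * ψ ≤ -(m / 2))
    (hQ : |-(2 * U2 * θ * B) + B ^ 2 * ψ - A * U2 * θ ^ 2| ≤ Q) :
    2 * δ * (-(U2 * θ) * ψ + B * ψ ^ 2) + δ ^ 2 * (U2 + A * ψ) + U2 * θ ^ 2 * ψ ^ 2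
      ≤ 2 * Q / m * ψ ^ 3 := by
  obtain ⟨c, hc⟩ : ∃ c, c = -(U2 + A * ψ) := ⟨_, rfl⟩
  have hc2 : m / 2 ≤ c := by linarith
  have hcpos : 0 < c := by linarith
  have hQ0 : 0 ≤ Q := (abs_nonneg _).trans hQ
  have hQ1 := (le_abs_self _).trans hQ
  have hQc : Q ≤ c * (2 * Q / m) := by
    have h1 : m / 2 * (2 * Q / m) = Q := by field_simp
    have h2 : m / 2 * (2 * Q / m) ≤ c * (2 * Q / m) := by gcongr
    linarith
  have h3 : (-(2 * U2 * θ * B) + B ^ 2 * ψ - A * U2 * θ ^ 2) * ψ ^ 3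
      ≤ c * (2 * Q / m) * ψ ^ 3 := by
    have : 0 < ψ ^ 3 := by positivity
    exact mul_le_mul_of_nonneg_right (hQ1.trans hQc) this.le
  have h4 := sq_nonneg (c * δ - (-(U2 * θ) * ψ + B * ψ ^ 2))
  refine le_of_mul_le_mul_left ?_ hcpos
  have hA : U2 + A * ψ = -c := by linarith
  have hA' : A * ψ = -c - U2 := by linarith
  rw [hA]
  have h5 : A * U2 * θ ^ 2 * ψ ^ 3 = (-c - U2) * U2 * θ ^ 2 * ψ ^ 2 := by
    rw [← hA']; ring
  nlinarith [h3, h4, h5]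

/-- The expansion of the HJBI operator in powers of `ψ`. -/
lemma expansion_identity
    (u U2 σ s X V F G S θ ψ δ wt wtT wtY wtSS whT q whSS A B r : ℝ) (hu : u ≠ 0) (hψ : ψ ≠ 0)
    (hX : s ^ 2 * V = X)
    (hS : F * S = σ * X)
    (p1 : wtT + 1 / 2 * σ ^ 2 * s ^ 2 * wtSS + 1 / 2 * F * S ^ 2 = 0)
    (p2 : whT + 1 / 2 * σ ^ 2 * s ^ 2 * whSS
      + (1 / 6 * S ^ 3 * G - 1 / 2 * S ^ 2 * s ^ 2 * V
        + S * σ * s ^ 2 * (V * wtY - wtSS)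
        - U2 / u * (1 / 2 * σ ^ 2 * s ^ 2 * θ ^ 2 - S ^ 2 * F * wt)) = 0) :
    (-(u * wtT) * ψ + u * whT * ψ ^ 2)
      + (1 / ψ * u * ((1 / 2 * F * (S * ψ) ^ 2 + 1 / 6 * G * (S * ψ) ^ 3) + r)
      + 1 / 2 * s ^ 2 * V * (σ ^ 2 - (σ + S * ψ) ^ 2)
        * (u - (U2 * wt + u * wtY) * ψ + q * ψ ^ 2)
      + 1 / 2 * (σ + S * ψ) ^ 2 * s ^ 2 *
        ((-(u * wtSS) * ψ + u * whSS * ψ ^ 2) + 2 * δ * (-(U2 * θ) * ψ + B * ψ ^ 2)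
          + δ ^ 2 * (U2 + A * ψ)))
    = 1 / ψ * u * r
      + (-(X * σ * S * q) + 1 / 2 * X * S ^ 2 * (U2 * wt + u * wtY) - 1 / 2 * X * S ^ 2 * q * ψ
        + σ * S * s ^ 2 * (u * whSS - U2 * θ ^ 2) - 1 / 2 * S ^ 2 * s ^ 2 * u * wtSS
        + 1 / 2 * S ^ 2 * s ^ 2 * (u * whSS - U2 * θ ^ 2) * ψ) * ψ ^ 3
      + 1 / 2 * (σ + S * ψ) ^ 2 * s ^ 2 *
        (2 * δ * (-(U2 * θ) * ψ + B * ψ ^ 2) + δ ^ 2 * (U2 + A * ψ) + U2 * θ ^ 2 * ψ ^ 2) := by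
  have p2' : u * whT + 1 / 2 * σ ^ 2 * s ^ 2 * (u * whSS)
      + (1 / 6 * S ^ 3 * G * u - 1 / 2 * S ^ 2 * s ^ 2 * V * u
        + S * σ * s ^ 2 * (V * wtY - wtSS) * u
        - U2 * (1 / 2 * σ ^ 2 * s ^ 2 * θ ^ 2 - S ^ 2 * F * wt)) = 0 := by
    have h := congrArg (fun z => u * z) p2
    simp only [mul_zero] at h
    rw [← h]
    field_simp
  have hfr : 1 / ψ * u * ((1 / 2 * F * (S * ψ) ^ 2 + 1 / 6 * G * (S * ψ) ^ 3) + r)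
      = u * (1 / 2 * F * S ^ 2 * ψ + 1 / 6 * G * S ^ 3 * ψ ^ 2) + 1 / ψ * u * r := by
    field_simp
  rw [hfr]
  subst hX
  linear_combination (-(u * ψ)) * p1 + ψ ^ 2 * p2' + (u * ψ * S - ψ ^ 2 * S * U2 * wt) * hS

/-- **Upper HJBI bound at the candidate volatility:** there are `C > 0` and `ψ₀ > 0` such
that for every `(t,s,y) ∈ D` and `ψ ∈ (0,ψ₀)`,
`w^ψ_t + sup_{ϑ ∈ ℝ} H^ψ(t,s,y; ϑ, σ^ψ(t,s,y)) ≤ C ψ³`. -/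
theorem hjbi_upper_bound_candidate_volatility (d : HedgeData) (hd : d.Assumptions)
    (hpde : d.PDEAssumptions) :
    ∃ C > (0:ℝ), ∃ ψ₀ > (0:ℝ),
      ∀ t ∈ Ioo (0:ℝ) d.T, ∀ s ∈ Ioo d.K⁻¹ d.K, ∀ y ∈ Ioo d.yl d.yu, ∀ ψ ∈ Ioo (0:ℝ) ψ₀,
        d.wPsiT ψ t s y + (⨆ ϑ : ℝ, d.Ham ψ t s y ϑ (d.sigmaPsi ψ t s y))
          ≤ C * ψ ^ 3 := by
  have hK := hd.hK
  have hK0 : (0:ℝ) < d.K := by linarith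
  let R : ℝ → ℝ → ℝ → ℝ → Prop := fun t s y ψ =>
    t ∈ Ioo (0:ℝ) d.T ∧ s ∈ Ioo d.K⁻¹ d.K ∧ y ∈ Ioo d.yl d.yu ∧ ψ ∈ Ioo (0:ℝ) 1
  -- basic bounds
  have bψ : UBdd R (fun _ _ _ ψ => ψ) :=
    ⟨1, fun t s y ψ h => by rw [abs_of_pos h.2.2.2.1]; exact h.2.2.2.2.le⟩
  have bs : UBdd R (fun _ s _ _ => s) :=
    ⟨d.K, fun t s y ψ h => by
      have : 0 < s := (inv_pos.mpr hK0).trans h.2.1.1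
      rw [abs_of_pos this]; exact h.2.1.2.le⟩
  have bσ : UBdd R (fun t s _ _ => d.sb t s) :=
    ⟨d.K, fun t s y ψ h => by
      have := hd.sb_mem t (Ioo_subset_Icc_self h.1) s (Ioo_subset_Icc_self h.2.1)
      rw [abs_of_nonneg this.1]; exact this.2⟩
  have bX : UBdd R (fun t s _ _ => s ^ 2 * d.Vss t s) :=
    ⟨d.K, fun t s y ψ h => hd.Vss_bdd t h.1 s h.2.1⟩
  have bcont : ∀ g : ℝ → ℝ, Continuous g → UBdd R (fun _ _ y _ => g y) := fun g hg => by
    obtain ⟨C, hC⟩ := isCompact_Icc.exists_bound_of_continuousOn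
      (s := Icc d.yl d.yu) hg.continuousOn
    exact ⟨C, fun t s y ψ h => hC y (Ioo_subset_Icc_self h.2.2.1)⟩
  have cU1 : Continuous d.U1 := continuous_iff_continuousAt.2 fun y => (hd.U_deriv2 y).continuousAt
  have cU2 : Continuous d.U2 := continuous_iff_continuousAt.2 fun y => (hd.U_deriv3 y).continuousAt
  have b1 := bcont _ cU1
  have b2 := bcont _ cU2
  have b3 := bcont _ hd.U3_cont
  have b12 := bcont _ (cU1.div cU2 fun y => (hd.U2_neg y).ne)
  have hcomp : IsCompact (Icc 0 d.T ×ˢ Icc d.K⁻¹ d.K ×ˢ Icc d.yl d.yu) :=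
    isCompact_Icc.prod (isCompact_Icc.prod isCompact_Icc)
  have bwt : UBdd R (fun t s y _ => d.wt t s y) := by
    obtain ⟨C, hC⟩ := hcomp.exists_bound_of_continuousOn hd.wt_cont
    exact ⟨C, fun t s y ψ h => hC (t, s, y) ⟨Ioo_subset_Icc_self h.1,
      Ioo_subset_Icc_self h.2.1, Ioo_subset_Icc_self h.2.2.1⟩⟩
  have bwh : UBdd R (fun t s y _ => d.wh t s y) := by
    obtain ⟨C, hC⟩ := hcomp.exists_bound_of_continuousOn hd.wh_cont
    exact ⟨C, fun t s y ψ h => hC (t, s, y) ⟨Ioo_subset_Icc_self h.1,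
      Ioo_subset_Icc_self h.2.1, Ioo_subset_Icc_self h.2.2.1⟩⟩
  have bt : ∀ g ∈ [d.wtT, d.wtS, d.wtY, d.wtSS, d.wtSY, d.wtYY],
      UBdd R (fun t s y _ => g t s y) := fun g hg =>
    ⟨d.K, fun t s y ψ h => hd.wt_bdd g hg t h.1 s h.2.1 y h.2.2.1⟩
  have bh : ∀ g ∈ [d.whT, d.whS, d.whY, d.whSS, d.whSY, d.whYY],
      UBdd R (fun t s y _ => g t s y) := fun g hg =>
    ⟨d.K, fun t s y ψ h => hd.wh_bdd g hg t h.1 s h.2.1 y h.2.2.1⟩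
  have btS := bt d.wtS (by simp)
  have btY := bt d.wtY (by simp)
  have btSS := bt d.wtSS (by simp)
  have btSY := bt d.wtSY (by simp)
  have btYY := bt d.wtYY (by simp)
  have bhS := bh d.whS (by simp)
  have bhY := bh d.whY (by simp)
  have bhSS := bh d.whSS (by simp)
  have bhSY := bh d.whSY (by simp)
  have bhYY := bh d.whYY (by simp)
  have bFi : UBdd R (fun t s y _ => (d.f2 t s y (d.sb t s))⁻¹) :=
    ⟨d.K, fun t s y ψ h => by
      have hm := hd.sb_mem t (Ioo_subset_Icc_self h.1) s (Ioo_subset_Icc_self h.2.1)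
      have := (hd.f2_bdd t h.1 s h.2.1 y h.2.2.1 _ hm).1
      have hp : 0 < 1 / d.K := by positivity
      rw [abs_of_pos (inv_pos.mpr (hp.trans_le this))]
      calc _ ≤ (1 / d.K)⁻¹ := inv_anti₀ hp this
        _ = d.K := by simp⟩
  have bS : UBdd R (fun t s y _ => d.sigmaTilde t s y) := by
    obtain ⟨C, hC⟩ := (bσ.mul bX).mul bFi
    refine ⟨C, fun t s y ψ h => ?_⟩
    have := hC t s y ψ h
    change |d.sigmaTilde t s y| ≤ C
    rwa [HedgeData.sigmaTilde, div_eq_mul_inv, mul_assoc (d.sb t s)]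
  have bθ : UBdd R (fun t s y _ => d.thetaTilde t s y) := by
    unfold HedgeData.thetaTilde
    exact btS.add (b12.mul btSY)
  -- composite quantities
  let q : ℝ → ℝ → ℝ → ℝ := fun t s y => d.U2 y * d.wh t s y + d.U1 y * d.whY t s y
  have bq : UBdd R (fun t s y _ => q t s y) := (b2.mul bwh).add (b1.mul bhY)
  let B : ℝ → ℝ → ℝ → ℝ := fun t s y => d.U2 y * d.whS t s y + d.U1 y * d.whSY t s y
  have bB : UBdd R (fun t s y _ => B t s y) := (b2.mul bhS).add (b1.mul bhSY)
  let A : ℝ → ℝ → ℝ → ℝ → ℝ := fun t s y ψ =>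
    -(d.U3 y * d.wt t s y + 2 * d.U2 y * d.wtY t s y + d.U1 y * d.wtYY t s y)
    + (d.U3 y * d.wh t s y + 2 * d.U2 y * d.whY t s y + d.U1 y * d.whYY t s y) * ψ
  have bA : UBdd R A :=
    ((((b3.mul bwt).add (((UBdd.const 2).mul b2).mul btY)).add (b1.mul btYY)).neg).add
      ((((b3.mul bwh).add (((UBdd.const 2).mul b2).mul bhY)).add (b1.mul bhYY)).mul bψ)
  have be : UBdd R (fun t s y _ => d.U1 y * d.whSS t s y - d.U2 y * d.thetaTilde t s y ^ 2) :=
    (b1.mul bhSS).sub (b2.mul (bθ.pow 2))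
  have bp : UBdd R (fun t s y _ => d.U2 y * d.wt t s y + d.U1 y * d.wtY t s y) :=
    (b2.mul bwt).add (b1.mul btY)
  obtain ⟨E, hE⟩ : UBdd R (fun t s y ψ =>
      -((s ^ 2 * d.Vss t s) * d.sb t s * d.sigmaTilde t s y * q t s y)
        + 1 / 2 * (s ^ 2 * d.Vss t s) * d.sigmaTilde t s y ^ 2
          * (d.U2 y * d.wt t s y + d.U1 y * d.wtY t s y)
        - 1 / 2 * (s ^ 2 * d.Vss t s) * d.sigmaTilde t s y ^ 2 * q t s y * ψ
        + d.sb t s * d.sigmaTilde t s y * s ^ 2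
          * (d.U1 y * d.whSS t s y - d.U2 y * d.thetaTilde t s y ^ 2)
        - 1 / 2 * d.sigmaTilde t s y ^ 2 * s ^ 2 * d.U1 y * d.wtSS t s y
        + 1 / 2 * d.sigmaTilde t s y ^ 2 * s ^ 2
          * (d.U1 y * d.whSS t s y - d.U2 y * d.thetaTilde t s y ^ 2) * ψ) :=
    (((((((bX.mul bσ).mul bS).mul bq).neg).add
      ((((UBdd.const (1 / 2)).mul bX).mul (bS.pow 2)).mul bp)).sub
      (((((UBdd.const (1 / 2)).mul bX).mul (bS.pow 2)).mul bq).mul bψ)).add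
      (((bσ.mul bS).mul (bs.pow 2)).mul be)).sub
      (((((UBdd.const (1 / 2)).mul (bS.pow 2)).mul (bs.pow 2)).mul b1).mul btSS) |>.add
      (((((UBdd.const (1 / 2)).mul (bS.pow 2)).mul (bs.pow 2)).mul be).mul bψ)
  obtain ⟨Q, hQ⟩ : UBdd R (fun t s y ψ =>
      -(2 * d.U2 y * d.thetaTilde t s y * B t s y) + B t s y ^ 2 * ψ
        - A t s y ψ * d.U2 y * d.thetaTilde t s y ^ 2) :=
    (((((UBdd.const 2).mul b2).mul bθ).mul bB).neg.add ((bB.pow 2).mul bψ)).sub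
      ((bA.mul b2).mul (bθ.pow 2))
  obtain ⟨P, hP⟩ : UBdd R (fun t s y ψ =>
      1 / 2 * (d.sb t s + d.sigmaTilde t s y * ψ) ^ 2 * s ^ 2) :=
    ((UBdd.const (1 / 2)).mul ((bσ.add (bS.mul bψ)).pow 2)).mul (bs.pow 2)
  obtain ⟨L, hL⟩ : UBdd R (fun t s y _ => d.U1 y * d.K * d.sigmaTilde t s y ^ 4) :=
    (b1.mul (UBdd.const d.K)).mul (bS.pow 4)
  obtain ⟨Z₀, hZ₀⟩ := bS
  obtain ⟨A₀, hA₀⟩ := bA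
  obtain ⟨m, hm, hmU⟩ : ∃ m > (0:ℝ), ∀ y ∈ Ioo d.yl d.yu, d.U2 y ≤ -m := by
    obtain ⟨y₀, -, hy₀⟩ := isCompact_Icc.exists_isMaxOn (s := Icc d.yl d.yu)
      (nonempty_Icc.2 hd.hy.le) cU2.continuousOn
    refine ⟨-d.U2 y₀, by linarith [hd.U2_neg y₀], fun y hy => ?_⟩
    have := hy₀ (Ioo_subset_Icc_self hy)
    simpa using this
  refine ⟨|L| + |E| + |P| * (2 * |Q| / m) + 1, by positivity,
    min 1 (min (d.eps / (|Z₀| + 1)) (m / 2 / (|A₀| + 1))),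
    lt_min one_pos (lt_min (div_pos hd.heps (by positivity)) (by positivity)), ?_⟩
  intro t ht s hs y hy ψ hψ
  have hψ0 : 0 < ψ := hψ.1
  have hψ1 : ψ < 1 := hψ.2.trans_le (min_le_left _ _)
  have hψ2 : ψ * (|Z₀| + 1) < d.eps :=
    (lt_div_iff₀ (by positivity)).1 (hψ.2.trans_le ((min_le_right _ _).trans (min_le_left _ _)))
  have hψ3 : ψ * (|A₀| + 1) < m / 2 :=
    (lt_div_iff₀ (by positivity)).1 (hψ.2.trans_le ((min_le_right _ _).trans (min_le_right _ _)))
  have hR : R t s y ψ := ⟨ht, hs, hy, hψ0, hψ1⟩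
  have hE' := hE t s y ψ hR
  have hQ' := (hQ t s y ψ hR).trans (le_abs_self Q)
  have hP' := hP t s y ψ hR
  have hL' := hL t s y ψ hR
  have hZ' := (hZ₀ t s y ψ hR).trans (le_abs_self _)
  have hA' := (hA₀ t s y ψ hR).trans (le_abs_self _)
  beta_reduce at hE' hQ' hP' hL' hZ'
  have htc := Ioo_subset_Icc_self ht
  have hσm := hd.sb_mem t htc s (Ioo_subset_Icc_self hs)
  have hZψ : |d.sigmaTilde t s y * ψ| ≤ d.eps := by
    rw [abs_mul, abs_of_pos hψ0]
    nlinarith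
  have hAψ : |A t s y ψ * ψ| ≤ m / 2 := by
    rw [abs_mul, abs_of_pos hψ0]
    nlinarith
  have hς : d.sb t s + d.sigmaTilde t s y * ψ ∈ Icc (0:ℝ) d.K := by
    have h1 := hd.sb_lb t htc s hs
    have h2 := hd.sb_ub t htc s hs
    have h3 := abs_le.1 hZψ
    constructor <;> linarith [h3.1, h3.2]
  have hF := (hd.f2_bdd t ht s hs y hy _ hσm).1
  have hF0 : 0 < d.f2 t s y (d.sb t s) := (by positivity : 0 < 1 / d.K).trans_le hF
  have hu := hd.U1_pos y
  have hU2 := hd.U2_neg y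
  have hTay := taylor_four (d.f t s y) (d.f1 t s y) (d.f2 t s y) (d.f3 t s y) (d.f4 t s y)
    d.K (d.sb t s) hK0.le hσm (hd.f_deriv1 t s y) (hd.f_deriv2 t s y) (hd.f_deriv3 t s y)
    (hd.f_deriv4 t s y) (hd.f_min t ht s hs y hy).1 (hd.f_min t ht s hs y hy).2
    (fun x hx => (hd.f34_bdd t ht s hs y hy x hx).2) _ hς
  rw [add_sub_cancel_left] at hTay
  obtain ⟨r, hr⟩ : ∃ r, r = d.f t s y (d.sb t s + d.sigmaTilde t s y * ψ) -
      (1 / 2 * d.f2 t s y (d.sb t s) * (d.sigmaTilde t s y * ψ) ^ 2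
        + 1 / 6 * d.f3 t s y (d.sb t s) * (d.sigmaTilde t s y * ψ) ^ 3) := ⟨_, rfl⟩
  rw [← hr] at hTay
  have hS : d.f2 t s y (d.sb t s) * d.sigmaTilde t s y = d.sb t s * (s ^ 2 * d.Vss t s) := by
    rw [HedgeData.sigmaTilde]
    field_simp
  have p1 : d.wtT t s y + 1 / 2 * d.sb t s ^ 2 * s ^ 2 * d.wtSS t s y
      + 1 / 2 * d.f2 t s y (d.sb t s) * d.sigmaTilde t s y ^ 2 = 0 := by
    rw [← hpde.pde_wt t ht s hs y hy, HedgeData.sigmaTilde]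
    field_simp
  have hr' : 1 / ψ * d.U1 y * r ≤ |L| * ψ ^ 3 := by
    have h1 : r ≤ d.K * (d.sigmaTilde t s y * ψ) ^ 4 := by
      have := (le_abs_self r).trans hTay
      rwa [Even.pow_abs (by decide)] at this
    calc 1 / ψ * d.U1 y * r ≤ 1 / ψ * d.U1 y * (d.K * (d.sigmaTilde t s y * ψ) ^ 4) := by gcongr
      _ = (d.U1 y * d.K * d.sigmaTilde t s y ^ 4) * ψ ^ 3 := by field_simp
      _ ≤ |L| * ψ ^ 3 := by
        gcongr
        exact (le_abs_self _).trans (hL'.trans (le_abs_self _))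
  suffices hmain : ∀ ϑ : ℝ, d.Ham ψ t s y ϑ (d.sigmaPsi ψ t s y)
      ≤ (|L| + |E| + |P| * (2 * |Q| / m) + 1) * ψ ^ 3 - d.wPsiT ψ t s y by
    have := ciSup_le hmain
    linarith
  intro ϑ
  have hquad := quad_bound (d.U2 y) (A t s y ψ) (B t s y) (d.thetaTilde t s y) ψ
    (ϑ - d.Vs t s) m |Q| hm hψ0 (by linarith [hmU y hy, (abs_le.1 hAψ).2]) hQ'
  have hid := expansion_identity (d.U1 y) (d.U2 y) (d.sb t s) s (s ^ 2 * d.Vss t s) (d.Vss t s)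
    (d.f2 t s y (d.sb t s)) (d.f3 t s y (d.sb t s)) (d.sigmaTilde t s y) (d.thetaTilde t s y)
    ψ (ϑ - d.Vs t s) (d.wt t s y) (d.wtT t s y) (d.wtY t s y) (d.wtSS t s y) (d.whT t s y)
    (q t s y) (d.whSS t s y) (A t s y ψ) (B t s y) r hu.ne' hψ0.ne' rfl hS p1
    (hpde.pde_wh t ht s hs y hy)
  have hfeq : 1 / 2 * d.f2 t s y (d.sb t s) * (d.sigmaTilde t s y * ψ) ^ 2
        + 1 / 6 * d.f3 t s y (d.sb t s) * (d.sigmaTilde t s y * ψ) ^ 3 + r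
      = d.f t s y (d.sb t s + d.sigmaTilde t s y * ψ) := by rw [hr]; ring
  rw [hfeq] at hid
  have hθ : d.U2 y * d.thetaTilde t s y = d.U2 y * d.wtS t s y + d.U1 y * d.wtSY t s y := by
    have hU2' : d.U2 y ≠ 0 := hU2.ne
    rw [HedgeData.thetaTilde]
    field_simp
  have hYY : d.U2 y + A t s y ψ * ψ = d.wPsiYY ψ t s y := by
    simp only [A, HedgeData.wPsiYY]
    ring
  have hSY : -(d.U2 y * d.thetaTilde t s y) * ψ + B t s y * ψ ^ 2 = d.wPsiSY ψ t s y := by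
    rw [hθ]
    rfl
  rw [hYY, hSY] at hid
  have hHam := (rfl : d.wPsiT ψ t s y + d.Ham ψ t s y ϑ (d.sigmaPsi ψ t s y) = _).trans hid
  have hPq := mul_le_mul_of_nonneg_left hquad
    (by positivity : 0 ≤ 1 / 2 * (d.sb t s + d.sigmaTilde t s y * ψ) ^ 2 * s ^ 2)
  have hPq2 : 1 / 2 * (d.sb t s + d.sigmaTilde t s y * ψ) ^ 2 * s ^ 2 * (2 * |Q| / m * ψ ^ 3)
      ≤ |P| * (2 * |Q| / m * ψ ^ 3) := by
    refine mul_le_mul_of_nonneg_right ?_ (by positivity)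
    exact (le_abs_self _).trans (hP'.trans (le_abs_self _))
  have hψ33 : 0 < ψ ^ 3 := by positivity
  have hE3 := mul_le_mul_of_nonneg_right
    ((le_abs_self _).trans (hE'.trans (le_abs_self E))) hψ33.le
  rw [hYY, hSY] at hPq
  linarith
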